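/- Let H₁ and H₂ be finite-dimensional complex Hilbert spaces and H = H₁ ⊗ H₂. The function ρ ↦ S(ρ) − S(ρ₁) is concave on the set of positive definite operators ρ on H, where S(ρ) = −Tr(ρ log ρ) is the von Neumann entropy and ρ₁ = Tr₂ ρ is the partial trace of ρ over H₂. That is, for all positive definite ρ, σ on H and all t ∈ [0,1], S(tρ + (1−t)σ) − S((tρ + (1−t)σ)₁) ≥ t(S(ρ) − S(ρ₁)) + (1−t)(S(σ) − S(σ₁)). -/

import Mathlib

open Matrix
open scoped ComplexOrder

attribute [local instance] Matrix.normedAddCommGroup Matrix.normedSpace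

/-- The matrix function induced by `f : ℝ → ℝ` via the functional calculus
(defined to be `0` on non-Hermitian matrices). -/
noncomputable def matFun {m : Type*} [Fintype m] [DecidableEq m] (f : ℝ → ℝ)
    (x : Matrix m m ℂ) : Matrix m m ℂ :=
  if hx : x.IsHermitian then
    (hx.eigenvectorUnitary : Matrix m m ℂ) *
      Matrix.diagonal (fun i => (f (hx.eigenvalues i) : ℂ)) *
      star (hx.eigenvectorUnitary : Matrix m m ℂ)
  else 0

/-- `D` is the (complex-linear extension of the) Fréchet differential at `x` of the matrix
function induced by `f`, the differential being taken within the real subspace of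
Hermitian matrices. -/
noncomputable def IsFDerivMatFun {m : Type*} [Fintype m] [DecidableEq m] (f : ℝ → ℝ)
    (x : Matrix m m ℂ) (D : Matrix m m ℂ →L[ℂ] Matrix m m ℂ) : Prop :=
  HasFDerivWithinAt (matFun f) (D.restrictScalars ℝ) {y : Matrix m m ℂ | y.IsHermitian} x

/-- `f : (0,∞) → ℝ` (given together with its derivative `f'`) is a matrix entropy:
it is twice continuously differentiable and for every `n` the map
`(x, h) ↦ Tr (h* ⬝ (Df' x) h)` is jointly convex in pairs `(x, h)` of an `n × n`
positive definite matrix `x` and an arbitrary `n × n` matrix `h`. -/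
noncomputable def IsMatrixEntropy (f f' : ℝ → ℝ) : Prop :=
  ContDiffOn ℝ 2 f (Set.Ioi 0) ∧
  (∀ t ∈ Set.Ioi (0 : ℝ), HasDerivAt f (f' t) t) ∧
  ∀ (n : ℕ)
    (D : Matrix (Fin n) (Fin n) ℂ → (Matrix (Fin n) (Fin n) ℂ →L[ℂ] Matrix (Fin n) (Fin n) ℂ)),
    (∀ x : Matrix (Fin n) (Fin n) ℂ, x.PosDef → IsFDerivMatFun f' x (D x)) →
    ConvexOn ℝ {q : Matrix (Fin n) (Fin n) ℂ × Matrix (Fin n) (Fin n) ℂ | q.1.PosDef}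
      (fun q => (Matrix.trace (q.2ᴴ * (D q.1) q.2)).re)

/-- The partial trace over the second tensor factor. -/
noncomputable def ptrace {ι₁ ι₂ : Type*} [Fintype ι₂]
    (ρ : Matrix (ι₁ × ι₂) (ι₁ × ι₂) ℂ) : Matrix ι₁ ι₁ ℂ :=
  Matrix.of fun i j => ∑ k : ι₂, ρ (i, k) (j, k)

/-- The von Neumann entropy `S(ρ) = −Tr(ρ log ρ)`. -/
noncomputable def vnEntropy {m : Type*} [Fintype m] [DecidableEq m]
    (ρ : Matrix m m ℂ) : ℝ :=
  -(Matrix.trace (ρ * matFun Real.log ρ)).re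


open scoped Kronecker Matrix

/-- A unitary diagonalization of `A` with positive real spectrum `a`. -/
structure PosDiag {m : Type*} [Fintype m] [DecidableEq m]
    (A U : Matrix m m ℂ) (a : m → ℝ) : Prop where
  left : Uᴴ * U = 1
  right : U * Uᴴ = 1
  eq : A = U * Matrix.diagonal (fun i => (a i : ℂ)) * Uᴴ
  pos : ∀ i, 0 < a i

theorem trace_diag_diag {m : Type*} [Fintype m] [DecidableEq m]
    (U V : Matrix m m ℂ) (f g : m → ℝ) :
    (Matrix.trace ((U * Matrix.diagonal (fun i => (f i : ℂ)) * Uᴴ) *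
      (V * Matrix.diagonal (fun i => (g i : ℂ)) * Vᴴ))).re
      = ∑ i, ∑ j, Complex.normSq ((Uᴴ * V) i j) * (f i * g j) := by
  have h : Matrix.trace ((U * Matrix.diagonal (fun i => (f i : ℂ)) * Uᴴ) *
      (V * Matrix.diagonal (fun i => (g i : ℂ)) * Vᴴ)) =
      Matrix.trace ((Matrix.diagonal (fun i => (f i : ℂ)) * (Uᴴ * V)) *
        (Matrix.diagonal (fun i => (g i : ℂ)) * (Uᴴ * V)ᴴ)) := by
    rw [Matrix.conjTranspose_mul, Matrix.conjTranspose_conjTranspose]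
    simp only [Matrix.mul_assoc]
    rw [Matrix.trace_mul_comm]
    simp only [Matrix.mul_assoc]
  rw [h, Matrix.trace, Complex.re_sum]
  refine Finset.sum_congr rfl fun i _ => ?_
  rw [Matrix.diag_apply, Matrix.mul_apply, Complex.re_sum]
  refine Finset.sum_congr rfl fun j _ => ?_
  rw [Matrix.diagonal_mul, Matrix.diagonal_mul, Matrix.conjTranspose_apply]
  simp [Complex.normSq_apply]
  ring

/-- The affine functional whose supremum over `Z` is the quadratic form. -/
noncomputable def affF {m : Type*} [Fintype m] [DecidableEq m]
    (s : ℝ) (Z A B : Matrix m m ℂ) : ℝ :=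
  2 * (Matrix.trace (Zᴴ * (A - B))).re - s * (Matrix.trace (Zᴴ * A * Z)).re
    - (1 - s) * (Matrix.trace (Z * B * Zᴴ)).re

theorem affF_lin {m : Type*} [Fintype m] [DecidableEq m] (s p q : ℝ)
    (Z A B A' B' : Matrix m m ℂ) :
    affF s Z (p • A + q • A') (p • B + q • B') = p * affF s Z A B + q * affF s Z A' B' := by
  simp only [affF, Matrix.mul_add, Matrix.add_mul, Matrix.mul_sub, Matrix.mul_smul,
    Matrix.smul_mul, Matrix.trace_add, Matrix.trace_sub, Matrix.trace_smul, Complex.add_re,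
    Complex.sub_re, Complex.smul_re, smul_eq_mul]
  ring

theorem affF_eq {m : Type*} [Fintype m] [DecidableEq m] {A B U V : Matrix m m ℂ} {a b : m → ℝ}
    (hA : PosDiag A U a) (hB : PosDiag B V b) (s : ℝ) (Y : Matrix m m ℂ) :
    affF s (U * Y * Vᴴ) A B = ∑ i, ∑ j,
      (2 * (a i - b j) * ((star (Y i j) * (Uᴴ * V) i j).re)
        - (s * a i + (1 - s) * b j) * Complex.normSq (Y i j)) := by
  have e1 : Matrix.trace ((U * Y * Vᴴ)ᴴ * (A - B)) =
      Matrix.trace (Yᴴ * (Matrix.diagonal (fun i => (a i : ℂ)) * (Uᴴ * V)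
        - (Uᴴ * V) * Matrix.diagonal (fun i => (b i : ℂ)))) := by
    have : (U * Y * Vᴴ)ᴴ * (A - B) = V * (Yᴴ * (Uᴴ * (A - B))) := by
      simp [Matrix.conjTranspose_mul, Matrix.mul_assoc]
    rw [this, Matrix.trace_mul_comm, Matrix.mul_assoc]
    congr 2
    rw [hA.eq, hB.eq]
    calc Uᴴ * (U * Matrix.diagonal (fun i => (a i : ℂ)) * Uᴴ
            - V * Matrix.diagonal (fun i => (b i : ℂ)) * Vᴴ) * V
        = (Uᴴ * U) * Matrix.diagonal (fun i => (a i : ℂ)) * (Uᴴ * V)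
            - Uᴴ * V * Matrix.diagonal (fun i => (b i : ℂ)) * (Vᴴ * V) := by
          simp only [Matrix.mul_sub, Matrix.sub_mul, Matrix.mul_assoc]
      _ = _ := by rw [hA.left, hB.left, Matrix.one_mul, Matrix.mul_one]
  have e2 : Matrix.trace ((U * Y * Vᴴ)ᴴ * A * (U * Y * Vᴴ)) =
      Matrix.trace (Yᴴ * (Matrix.diagonal (fun i => (a i : ℂ)) * Y)) := by
    have : (U * Y * Vᴴ)ᴴ * A * (U * Y * Vᴴ) =
        V * (Yᴴ * ((Uᴴ * U) * Matrix.diagonal (fun i => (a i : ℂ)) * (Uᴴ * U) * Y) * Vᴴ) := by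
      rw [hA.eq]
      simp only [Matrix.conjTranspose_mul, Matrix.conjTranspose_conjTranspose, Matrix.mul_assoc]
    rw [this, Matrix.trace_mul_comm, Matrix.mul_assoc, hB.left, hA.left]
    simp
  have e3 : Matrix.trace ((U * Y * Vᴴ) * B * (U * Y * Vᴴ)ᴴ) =
      Matrix.trace (Yᴴ * (Y * Matrix.diagonal (fun i => (b i : ℂ)))) := by
    have : (U * Y * Vᴴ) * B * (U * Y * Vᴴ)ᴴ =
        U * (Y * ((Vᴴ * V) * Matrix.diagonal (fun i => (b i : ℂ)) * (Vᴴ * V) * Yᴴ) * Uᴴ) := by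
      rw [hB.eq]
      simp only [Matrix.conjTranspose_mul, Matrix.conjTranspose_conjTranspose, Matrix.mul_assoc]
    rw [this, Matrix.trace_mul_comm, Matrix.mul_assoc, hB.left, hA.left]
    simp only [Matrix.one_mul, Matrix.mul_one]
    rw [← Matrix.mul_assoc, Matrix.trace_mul_comm]
  have tr : ∀ M : Matrix m m ℂ, (Matrix.trace (Yᴴ * M)).re
      = ∑ i, ∑ j, (star (Y i j) * M i j).re := by
    intro M
    rw [Matrix.trace, Complex.re_sum, Finset.sum_comm]
    refine Finset.sum_congr rfl fun i _ => ?_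
    rw [Matrix.diag_apply, Matrix.mul_apply, Complex.re_sum]
    rfl
  rw [affF, e1, e2, e3, tr, tr, tr]
  simp only [Finset.mul_sum, ← Finset.sum_sub_distrib]
  refine Finset.sum_congr rfl fun i _ => Finset.sum_congr rfl fun j _ => ?_
  rw [Matrix.sub_apply, Matrix.diagonal_mul, Matrix.mul_diagonal, Matrix.diagonal_mul,
    Matrix.mul_diagonal]
  simp [Complex.normSq_apply]
  ring

/-- The quadratic form in diagonal coordinates. -/
noncomputable def quadPhi {m : Type*} [Fintype m] [DecidableEq m]
    (U V : Matrix m m ℂ) (a b : m → ℝ) (s : ℝ) : ℝ :=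
  ∑ i, ∑ j, Complex.normSq ((Uᴴ * V) i j) * ((a i - b j) ^ 2 / (s * a i + (1 - s) * b j))

theorem den_pos {x y s : ℝ} (hx : 0 < x) (hy : 0 < y) (h0 : 0 ≤ s) (h1 : s ≤ 1) :
    0 < s * x + (1 - s) * y := by
  rcases h0.eq_or_lt with h | h
  · subst h; simpa using hy
  · have := mul_pos h hx
    have := mul_nonneg (sub_nonneg.2 h1) hy.le
    linarith

theorem affF_le {m : Type*} [Fintype m] [DecidableEq m] {A B U V : Matrix m m ℂ} {a b : m → ℝ}
    (hA : PosDiag A U a) (hB : PosDiag B V b) {s : ℝ} (h0 : 0 ≤ s) (h1 : s ≤ 1)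
    (Z : Matrix m m ℂ) : affF s Z A B ≤ quadPhi U V a b s := by
  have hZ : Z = U * (Uᴴ * Z * V) * Vᴴ := by
    calc Z = (U * Uᴴ) * Z * (V * Vᴴ) := by rw [hA.right, hB.right]; simp
      _ = _ := by simp only [Matrix.mul_assoc]
  rw [hZ, affF_eq hA hB, quadPhi]
  refine Finset.sum_le_sum fun i _ => Finset.sum_le_sum fun j _ => ?_
  have hc := den_pos (hA.pos i) (hB.pos j) h0 h1
  set c := s * a i + (1 - s) * b j
  set y := (Uᴴ * Z * V) i j
  set w := (Uᴴ * V) i j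
  rw [← mul_div_assoc, le_div_iff₀ hc]
  simp only [Complex.normSq_apply, Complex.mul_re, Complex.star_def, Complex.conj_re,
    Complex.conj_im]
  nlinarith [sq_nonneg (c * y.re - (a i - b j) * w.re),
    sq_nonneg (c * y.im - (a i - b j) * w.im)]

theorem affF_attained {m : Type*} [Fintype m] [DecidableEq m] {A B U V : Matrix m m ℂ}
    {a b : m → ℝ}
    (hA : PosDiag A U a) (hB : PosDiag B V b) {s : ℝ} (h0 : 0 ≤ s) (h1 : s ≤ 1) :
    ∃ Z : Matrix m m ℂ, affF s Z A B = quadPhi U V a b s := by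
  refine ⟨U * (Matrix.of fun i j =>
    (((a i - b j) / (s * a i + (1 - s) * b j) : ℝ) : ℂ) * (Uᴴ * V) i j) * Vᴴ, ?_⟩
  rw [affF_eq hA hB, quadPhi]
  refine Finset.sum_congr rfl fun i _ => Finset.sum_congr rfl fun j _ => ?_
  have hc := den_pos (hA.pos i) (hB.pos j) h0 h1
  rw [Matrix.of_apply]
  set c := s * a i + (1 - s) * b j
  set w := (Uᴴ * V) i j
  rw [Complex.normSq_mul, Complex.normSq_ofReal]
  have : (star ((((a i - b j) / c : ℝ) : ℂ) * w) * w).re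
      = (a i - b j) / c * Complex.normSq w := by
    simp only [Complex.normSq_apply, Complex.mul_re, Complex.mul_im, Complex.star_def,
      Complex.conj_re, Complex.conj_im, Complex.ofReal_re, Complex.ofReal_im]
    ring
  rw [this]
  clear_value c
  field_simp
  ring

theorem integral_scalar {x y : ℝ} (hx : 0 < x) (hy : 0 < y) :
    ∫ s in (0 : ℝ)..1, (1 - s) * ((x - y) ^ 2 / (s * x + (1 - s) * y))
      = x * Real.log x - x * Real.log y - x + y := by
  have key : ∀ s ∈ Set.uIcc (0 : ℝ) 1,
      HasDerivAt (fun s => x * Real.log (s * x + (1 - s) * y) - (x - y) * s)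
        ((1 - s) * ((x - y) ^ 2 / (s * x + (1 - s) * y))) s := by
    intro s hs
    rw [Set.uIcc_of_le zero_le_one] at hs
    have hc := den_pos hx hy hs.1 hs.2
    have h1 : HasDerivAt (fun s : ℝ => s * x + (1 - s) * y) (1 * x + (-1) * y) s :=
      ((hasDerivAt_id s).mul_const x).add (((hasDerivAt_id s).const_sub 1).mul_const y)
    have h2 := ((h1.log hc.ne').const_mul x).sub ((hasDerivAt_id s).const_mul (x - y))
    refine h2.congr_deriv ?_
    have hne := hc.ne'
    generalize hcd : s * x + (1 - s) * y = c at hne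
    field_simp
    rw [← hcd]
    ring
  rw [intervalIntegral.integral_eq_sub_of_hasDerivAt key]
  · simp
    ring
  · refine ContinuousOn.intervalIntegrable fun s hs => ?_
    rw [Set.uIcc_of_le zero_le_one] at hs
    have hc := den_pos hx hy hs.1 hs.2
    refine ContinuousAt.continuousWithinAt ?_
    have : ContinuousAt (fun s : ℝ => s * x + (1 - s) * y) s := by fun_prop
    exact (by fun_prop : ContinuousAt (fun s : ℝ => 1 - s) s).mul
      (continuousAt_const.div this hc.ne')

theorem intble_scalar {x y : ℝ} (hx : 0 < x) (hy : 0 < y) :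
    IntervalIntegrable (fun s => (1 - s) * ((x - y) ^ 2 / (s * x + (1 - s) * y)))
      MeasureTheory.volume 0 1 := by
  refine ContinuousOn.intervalIntegrable fun s hs => ?_
  rw [Set.uIcc_of_le zero_le_one] at hs
  have hc := den_pos hx hy hs.1 hs.2
  refine ContinuousAt.continuousWithinAt ?_
  have : ContinuousAt (fun s : ℝ => s * x + (1 - s) * y) s := by fun_prop
  exact (by fun_prop : ContinuousAt (fun s : ℝ => 1 - s) s).mul
    (continuousAt_const.div this hc.ne')

theorem quadPhi_expand {m : Type*} [Fintype m] [DecidableEq m]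
    (U V : Matrix m m ℂ) (a b : m → ℝ) (s : ℝ) :
    (1 - s) * quadPhi U V a b s = ∑ i, ∑ j, Complex.normSq ((Uᴴ * V) i j) *
      ((1 - s) * ((a i - b j) ^ 2 / (s * a i + (1 - s) * b j))) := by
  simp only [quadPhi, Finset.mul_sum]
  refine Finset.sum_congr rfl fun i _ => Finset.sum_congr rfl fun j _ => ?_
  ring

theorem intble_quadPhi {m : Type*} [Fintype m] [DecidableEq m]
    (U V : Matrix m m ℂ) {a b : m → ℝ} (ha : ∀ i, 0 < a i) (hb : ∀ i, 0 < b i) :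
    IntervalIntegrable (fun s => (1 - s) * quadPhi U V a b s) MeasureTheory.volume 0 1 := by
  simp only [quadPhi_expand]
  have := IntervalIntegrable.sum (μ := MeasureTheory.volume) (a := (0 : ℝ)) (b := 1)
    (Finset.univ : Finset (m × m))
    (f := fun p s => Complex.normSq ((Uᴴ * V) p.1 p.2) *
      ((1 - s) * ((a p.1 - b p.2) ^ 2 / (s * a p.1 + (1 - s) * b p.2))))
    (fun p _ => (intble_scalar (ha p.1) (hb p.2)).const_mul _)
  refine this.congr fun s _ => ?_
  simp [Fintype.sum_prod_type]

theorem integral_quadPhi {m : Type*} [Fintype m] [DecidableEq m]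
    (U V : Matrix m m ℂ) {a b : m → ℝ} (ha : ∀ i, 0 < a i) (hb : ∀ i, 0 < b i) :
    ∫ s in (0 : ℝ)..1, (1 - s) * quadPhi U V a b s = ∑ i, ∑ j,
      Complex.normSq ((Uᴴ * V) i j) *
        (a i * Real.log (a i) - a i * Real.log (b j) - a i + b j) := by
  simp only [quadPhi_expand]
  simp only [← Fintype.sum_prod_type']
  rw [intervalIntegral.integral_finsetSum
    (fun p _ => (intble_scalar (ha p.1) (hb p.2)).const_mul _)]
  refine Finset.sum_congr rfl fun p _ => ?_
  rw [intervalIntegral.integral_const_mul, integral_scalar (ha _) (hb _)]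

/-- Relative entropy in terms of diagonalizations. -/
noncomputable def relEnt {m : Type*} [Fintype m] [DecidableEq m]
    (A U V : Matrix m m ℂ) (a b : m → ℝ) : ℝ :=
  (Matrix.trace (A * (U * Matrix.diagonal (fun i => (Real.log (a i) : ℂ)) * Uᴴ))).re -
  (Matrix.trace (A * (V * Matrix.diagonal (fun i => (Real.log (b i) : ℂ)) * Vᴴ))).re

theorem relEnt_eq {m : Type*} [Fintype m] [DecidableEq m] {A B U V : Matrix m m ℂ}
    {a b : m → ℝ} (hA : PosDiag A U a) (hB : PosDiag B V b) :
    relEnt A U V a b = (∫ s in (0 : ℝ)..1, (1 - s) * quadPhi U V a b s)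
      + A.trace.re - B.trace.re := by
  rw [integral_quadPhi U V hA.pos hB.pos, relEnt]
  have t1 : (Matrix.trace (A * (U * Matrix.diagonal (fun i => (Real.log (a i) : ℂ)) * Uᴴ))).re
      = ∑ i, ∑ j, Complex.normSq ((Uᴴ * V) i j) * (a i * Real.log (a i) * 1) := by
    rw [← trace_diag_diag U V (fun i => a i * Real.log (a i)) (fun _ => 1), hA.eq]
    have : (U * Matrix.diagonal (fun i => (a i : ℂ)) * Uᴴ) *
        (U * Matrix.diagonal (fun i => (Real.log (a i) : ℂ)) * Uᴴ) =
        U * Matrix.diagonal (fun i => ((a i * Real.log (a i) : ℝ) : ℂ)) * Uᴴ := by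
      calc _ = U * (Matrix.diagonal (fun i => (a i : ℂ)) * (Uᴴ * U) *
          Matrix.diagonal (fun i => (Real.log (a i) : ℂ))) * Uᴴ := by
            simp only [Matrix.mul_assoc]
        _ = _ := by
            rw [hA.left, Matrix.mul_one, Matrix.diagonal_mul_diagonal]
            simp
    rw [this]
    simp [hB.right]
  have t2 : (Matrix.trace (A * (V * Matrix.diagonal (fun i => (Real.log (b i) : ℂ)) * Vᴴ))).re
      = ∑ i, ∑ j, Complex.normSq ((Uᴴ * V) i j) * (a i * Real.log (b j)) := by
    rw [← trace_diag_diag U V a (fun i => Real.log (b i)), ← hA.eq]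
  have t3 : A.trace.re = ∑ i, ∑ j, Complex.normSq ((Uᴴ * V) i j) * (a i * 1) := by
    rw [← trace_diag_diag U V a (fun _ => 1), ← hA.eq]
    simp [hB.right]
  have t4 : B.trace.re = ∑ i, ∑ j, Complex.normSq ((Uᴴ * V) i j) * (1 * b j) := by
    rw [← trace_diag_diag U V (fun _ => 1) b, ← hB.eq]
    simp [hA.right]
  rw [t1, t2, t3, t4]
  simp only [← Finset.sum_sub_distrib, ← Finset.sum_add_distrib]
  refine Finset.sum_congr rfl fun i _ => Finset.sum_congr rfl fun j _ => ?_
  ring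

/-- Joint convexity of the relative entropy. -/
theorem relEnt_convex {m : Type*} [Fintype m] [DecidableEq m]
    {A B U V A₁ B₁ U₁ V₁ A₂ B₂ U₂ V₂ : Matrix m m ℂ} {a b a₁ b₁ a₂ b₂ : m → ℝ}
    (hA : PosDiag A U a) (hB : PosDiag B V b)
    (hA₁ : PosDiag A₁ U₁ a₁) (hB₁ : PosDiag B₁ V₁ b₁)
    (hA₂ : PosDiag A₂ U₂ a₂) (hB₂ : PosDiag B₂ V₂ b₂)
    {p q : ℝ} (hp : 0 ≤ p) (hq : 0 ≤ q)
    (eA : A = p • A₁ + q • A₂) (eB : B = p • B₁ + q • B₂) :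
    relEnt A U V a b ≤ p * relEnt A₁ U₁ V₁ a₁ b₁ + q * relEnt A₂ U₂ V₂ a₂ b₂ := by
  rw [relEnt_eq hA hB, relEnt_eq hA₁ hB₁, relEnt_eq hA₂ hB₂]
  have tA : A.trace.re = p * A₁.trace.re + q * A₂.trace.re := by
    rw [eA]; simp [Matrix.trace_add, Matrix.trace_smul]
  have tB : B.trace.re = p * B₁.trace.re + q * B₂.trace.re := by
    rw [eB]; simp [Matrix.trace_add, Matrix.trace_smul]
  have i₁ := intble_quadPhi U₁ V₁ hA₁.pos hB₁.pos
  have i₂ := intble_quadPhi U₂ V₂ hA₂.pos hB₂.pos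
  have main : (∫ s in (0 : ℝ)..1, (1 - s) * quadPhi U V a b s) ≤
      ∫ s in (0 : ℝ)..1, (p * ((1 - s) * quadPhi U₁ V₁ a₁ b₁ s)
        + q * ((1 - s) * quadPhi U₂ V₂ a₂ b₂ s)) := by
    refine intervalIntegral.integral_mono_on zero_le_one (intble_quadPhi U V hA.pos hB.pos)
      ((i₁.const_mul p).add (i₂.const_mul q)) fun s hs => ?_
    obtain ⟨Z, hZ⟩ := affF_attained hA hB hs.1 hs.2
    have l₁ := mul_le_mul_of_nonneg_left (affF_le hA₁ hB₁ hs.1 hs.2 Z) hp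
    have l₂ := mul_le_mul_of_nonneg_left (affF_le hA₂ hB₂ hs.1 hs.2 Z) hq
    have : quadPhi U V a b s ≤ p * quadPhi U₁ V₁ a₁ b₁ s + q * quadPhi U₂ V₂ a₂ b₂ s := by
      rw [← hZ, eA, eB, affF_lin]
      exact add_le_add l₁ l₂
    have := mul_le_mul_of_nonneg_left this (sub_nonneg.2 hs.2)
    linarith
  rw [intervalIntegral.integral_add (i₁.const_mul p) (i₂.const_mul q),
    intervalIntegral.integral_const_mul, intervalIntegral.integral_const_mul] at main
  rw [tA, tB]
  linarith

theorem posDiag_of_posDef {m : Type*} [Fintype m] [DecidableEq m] {A : Matrix m m ℂ}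
    (h : A.PosDef) :
    PosDiag A (h.1.eigenvectorUnitary : Matrix m m ℂ) h.1.eigenvalues := by
  refine ⟨?_, ?_, ?_, h.eigenvalues_pos⟩
  · exact Unitary.coe_star_mul_self h.1.eigenvectorUnitary
  · exact Unitary.coe_mul_star_self h.1.eigenvectorUnitary
  · have := h.1.spectral_theorem
    rw [Unitary.conjStarAlgAut_apply] at this
    exact this

theorem ptrace_eq_sum {ι₁ ι₂ : Type*} [Fintype ι₂] (ρ : Matrix (ι₁ × ι₂) (ι₁ × ι₂) ℂ) :
    ptrace ρ = ∑ k : ι₂, ρ.submatrix (fun i => (i, k)) (fun i => (i, k)) := by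
  ext i j
  simp [ptrace, Matrix.sum_apply]

theorem ptrace_posDef {ι₁ ι₂ : Type*} [Fintype ι₁] [Fintype ι₂] [Nonempty ι₂]
    {ρ : Matrix (ι₁ × ι₂) (ι₁ × ι₂) ℂ} (h : ρ.PosDef) : (ptrace ρ).PosDef := by
  rw [ptrace_eq_sum]
  refine Finset.sum_induction_nonempty _ Matrix.PosDef (fun _ _ ha hb => ha.add hb)
    Finset.univ_nonempty fun k _ => ?_
  exact h.submatrix (fun i j hij => by simpa using hij)

theorem posDiag_kron {ι₁ ι₂ : Type*} [Fintype ι₁] [DecidableEq ι₁] [Fintype ι₂] [DecidableEq ι₂]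
    {A U : Matrix ι₁ ι₁ ℂ} {a : ι₁ → ℝ} (h : PosDiag A U a) :
    PosDiag (A ⊗ₖ (1 : Matrix ι₂ ι₂ ℂ)) (U ⊗ₖ (1 : Matrix ι₂ ι₂ ℂ)) (fun p => a p.1) := by
  have hd : Matrix.diagonal (fun p : ι₁ × ι₂ => (a p.1 : ℂ)) =
      Matrix.diagonal (fun i => (a i : ℂ)) ⊗ₖ (1 : Matrix ι₂ ι₂ ℂ) := by
    rw [← Matrix.diagonal_one, Matrix.diagonal_kronecker_diagonal]
    simp
  refine ⟨?_, ?_, ?_, fun p => h.pos p.1⟩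
  · rw [Matrix.conjTranspose_kronecker, ← Matrix.mul_kronecker_mul, h.left]; simp
  · rw [Matrix.conjTranspose_kronecker, ← Matrix.mul_kronecker_mul, h.right]; simp
  · rw [hd, Matrix.conjTranspose_kronecker, ← Matrix.mul_kronecker_mul,
      ← Matrix.mul_kronecker_mul, ← h.eq]; simp

theorem trace_mul_kron {ι₁ ι₂ : Type*} [Fintype ι₁] [Fintype ι₂] [DecidableEq ι₂]
    (ρ : Matrix (ι₁ × ι₂) (ι₁ × ι₂) ℂ) (X : Matrix ι₁ ι₁ ℂ) :
    Matrix.trace (ρ * (X ⊗ₖ (1 : Matrix ι₂ ι₂ ℂ))) = Matrix.trace (ptrace ρ * X) := by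
  simp only [Matrix.trace, Matrix.diag_apply, Matrix.mul_apply, Fintype.sum_prod_type,
    Matrix.kroneckerMap_apply, Matrix.one_apply, ptrace, Matrix.of_apply, mul_ite, mul_one,
    mul_zero, Finset.sum_ite_eq', Finset.mem_univ, if_true, Finset.sum_mul]
  refine Finset.sum_congr rfl fun i _ => ?_
  rw [Finset.sum_comm]

theorem condEnt_eq {ι₁ ι₂ : Type*} [Fintype ι₁] [DecidableEq ι₁] [Fintype ι₂] [DecidableEq ι₂]
    {ρ : Matrix (ι₁ × ι₂) (ι₁ × ι₂) ℂ} (h : ρ.PosDef) (h' : (ptrace ρ).PosDef) :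
    vnEntropy ρ - vnEntropy (ptrace ρ) =
      -relEnt ρ (h.1.eigenvectorUnitary : Matrix (ι₁ × ι₂) (ι₁ × ι₂) ℂ)
        ((h'.1.eigenvectorUnitary : Matrix ι₁ ι₁ ℂ) ⊗ₖ (1 : Matrix ι₂ ι₂ ℂ))
        h.1.eigenvalues (fun p => h'.1.eigenvalues p.1) := by
  have hd : Matrix.diagonal (fun p : ι₁ × ι₂ => (Real.log (h'.1.eigenvalues p.1) : ℂ)) =
      Matrix.diagonal (fun i => (Real.log (h'.1.eigenvalues i) : ℂ))
        ⊗ₖ (1 : Matrix ι₂ ι₂ ℂ) := by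
    rw [← Matrix.diagonal_one, Matrix.diagonal_kronecker_diagonal]
    simp
  have hk : ∀ U D : Matrix ι₁ ι₁ ℂ, (U ⊗ₖ (1 : Matrix ι₂ ι₂ ℂ)) * (D ⊗ₖ (1 : Matrix ι₂ ι₂ ℂ)) *
      (U ⊗ₖ (1 : Matrix ι₂ ι₂ ℂ))ᴴ = (U * D * Uᴴ) ⊗ₖ (1 : Matrix ι₂ ι₂ ℂ) := by
    intro U D
    rw [Matrix.conjTranspose_kronecker, ← Matrix.mul_kronecker_mul, ← Matrix.mul_kronecker_mul]
    simp
  rw [relEnt, hd, hk, trace_mul_kron, vnEntropy, vnEntropy, matFun, matFun, dif_pos h.1,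
    dif_pos h'.1]
  simp only [Matrix.star_eq_conjTranspose]
  ring

theorem convex_posDef {m : Type*} [Fintype m] : Convex ℝ {ρ : Matrix m m ℂ | ρ.PosDef} := by
  rw [convex_iff_forall_pos]
  intro x hx y hy p q hp hq _
  exact (Matrix.PosDef.smul hx hp).add (Matrix.PosDef.smul hy hq)

/-- The map `ρ ↦ S(ρ) − S(ρ₁)` is concave on positive definite
operators on `H = H₁ ⊗ H₂`, where `ρ₁ = Tr₂ ρ`. -/
theorem vnEntropy_sub_partialTrace_concave
    {ι₁ ι₂ : Type*} [Fintype ι₁] [DecidableEq ι₁] [Fintype ι₂] [DecidableEq ι₂] :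
    ConcaveOn ℝ {ρ : Matrix (ι₁ × ι₂) (ι₁ × ι₂) ℂ | ρ.PosDef}
      (fun ρ => vnEntropy ρ - vnEntropy (ptrace ρ)) := by
  refine ⟨convex_posDef, ?_⟩
  intro x hx y hy p q hp hq hpq
  have hz : (p • x + q • y).PosDef := convex_posDef hx hy hp hq hpq
  rcases isEmpty_or_nonempty ι₂ with he | hne
  · have e1 : y = x := Subsingleton.elim _ _
    have e2 : p • x + q • x = x := by rw [← add_smul, hpq, one_smul]
    subst e1
    rw [e2, ← add_smul, hpq, one_smul]
  · have hx' := ptrace_posDef (show x.PosDef from hx)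
    have hy' := ptrace_posDef (show y.PosDef from hy)
    have hz' := ptrace_posDef hz
    have eB : (ptrace (p • x + q • y)) ⊗ₖ (1 : Matrix ι₂ ι₂ ℂ) =
        p • (ptrace x ⊗ₖ (1 : Matrix ι₂ ι₂ ℂ)) + q • (ptrace y ⊗ₖ (1 : Matrix ι₂ ι₂ ℂ)) := by
      ext i j
      simp [ptrace, Finset.sum_add_distrib, Finset.mul_sum, add_mul, Finset.sum_mul, mul_assoc]
    have key := relEnt_convex (posDiag_of_posDef hz) (posDiag_kron (posDiag_of_posDef hz'))
      (posDiag_of_posDef (show x.PosDef from hx)) (posDiag_kron (posDiag_of_posDef hx'))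
      (posDiag_of_posDef (show y.PosDef from hy)) (posDiag_kron (posDiag_of_posDef hy'))
      hp hq rfl eB
    show p • (vnEntropy x - vnEntropy (ptrace x)) + q • (vnEntropy y - vnEntropy (ptrace y)) ≤
      vnEntropy (p • x + q • y) - vnEntropy (ptrace (p • x + q • y))
    rw [condEnt_eq hx hx', condEnt_eq hy hy', condEnt_eq hz hz', smul_eq_mul, smul_eq_mul]
    linarith
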